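/- Let x : Fin 11 → ℝ^10 be a regular 11-simplex and let Y1 be the associated 840-element set of unit vectors, with the graph on Y1 in which y, y' are adjacent iff ⟨y, y'⟩ = α2. Then this graph contains exactly 30240 cliques of order 10. -/

import Mathlib

/-!
Since the Gram matrix of the simplex is a multiple of the projection onto the vectors of coordinate
sum `0`, a vector is determined by its inner products with the simplex vertices. Hence the vectors
of `Y1` correspond to pairs `(p, T)` with `p ∉ T` and `#T = 3`, where `p` marks the angle `α2` and
`T` the angle `α3`. The vectors of `(p, T)` and `(p', T')` have inner product `α2` exactly when
`p ≠ p'`, `p' ∈ T ↔ p ∈ T'`, and `T`, `T'` have no common element if `p' ∈ T` and exactly one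
otherwise. In a clique of order 10 every `p` therefore occurs once, and reading `T` as the
neighborhood of `p` turns the clique into a strongly regular graph with parameters `(10, 3, 0, 1)`.

Every such graph is isomorphic to the Petersen graph, and an isomorphism is the same as a pentagon
in the graph: the third neighbors of the vertices of a pentagon always form the inner pentagram.
Counting pentagons along their first side yields `10 * 3 * 2 ^ 2 = 120` isomorphisms for each graph.
As each of the `10!` bijections from the Petersen graph onto ten vertices is an isomorphism onto
exactly one graph, there are `10! / 120 = 30240` graphs.
-/

open RealInnerProductSpace

noncomputable section

/-- The three admissible inner product values (angles). -/
def α1 : ℝ := 4/15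
def α2 : ℝ := -1/10
def α3 : ℝ := -7/15

/-- A regular 11-simplex in ℝ^10: eleven unit vectors with pairwise inner
products equal to -1/10. -/
def IsRegularSimplex (x : Fin 11 → EuclideanSpace ℝ (Fin 10)) : Prop :=
  (∀ i, ‖x i‖ = 1) ∧ ∀ i j : Fin 11, i ≠ j → ⟪x i, x j⟫ = -1/10

/-- The set `Y1`: unit vectors `y` with `⟪x 0, y⟫ = α2` such that among the
indices `i ≠ 0`, exactly six satisfy `⟪x i, y⟫ = α1`, exactly one satisfies
`⟪x i, y⟫ = α2`, and exactly three satisfy `⟪x i, y⟫ = α3`. -/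
def Y1set (x : Fin 11 → EuclideanSpace ℝ (Fin 10)) : Set (EuclideanSpace ℝ (Fin 10)) :=
  {y | ‖y‖ = 1 ∧ ⟪x 0, y⟫ = α2 ∧
    {i : Fin 11 | i ≠ 0 ∧ ⟪x i, y⟫ = α1}.ncard = 6 ∧
    {i : Fin 11 | i ≠ 0 ∧ ⟪x i, y⟫ = α2}.ncard = 1 ∧
    {i : Fin 11 | i ≠ 0 ∧ ⟪x i, y⟫ = α3}.ncard = 3}

/-- A clique of order 10 in the graph on `Y1` in which two distinct vectors are
adjacent iff their inner product equals `α2`. -/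
def IsClique10 (x : Fin 11 → EuclideanSpace ℝ (Fin 10))
    (D : Set (EuclideanSpace ℝ (Fin 10))) : Prop :=
  D ⊆ Y1set x ∧ D.ncard = 10 ∧
    ∀ y ∈ D, ∀ y' ∈ D, y ≠ y' → ⟪y, y'⟫ = α2

open Finset

section MooreGraphs

variable {V W : Type*} {G : SimpleGraph V}

theorem not_adj_of_cliqueFree_three (hG : G.CliqueFree 3) {u v w : V} (huv : G.Adj u v)
    (hvw : G.Adj v w) : ¬G.Adj u w := by
  classical
  exact fun huw => hG {u, v, w} (SimpleGraph.is3Clique_triple_iff.2 ⟨huv, huw, hvw⟩)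

theorem sum_natCard_iso [Finite V] [Fintype W] [DecidableEq W] (P : SimpleGraph V) :
    ∑ G : SimpleGraph W, Nat.card (P ≃g G) = Nat.card (V ≃ W) := by
  let fiberEquiv (G : SimpleGraph W) : {e : V ≃ W // P.comap e.symm = G} ≃ (P ≃g G) :=
    { toFun := fun e => ⟨e.1, by simp [← e.2]⟩
      invFun := fun f => ⟨f.toEquiv, by ext a b; exact f.symm.map_adj_iff⟩ }
  rw [← Nat.card_congr (Equiv.sigmaFiberEquiv fun e : V ≃ W => P.comap e.symm), Nat.card_sigma]
  exact sum_congr rfl fun G _ => (Nat.card_congr (fiberEquiv G)).symm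

theorem map_adj_iff_of_injective [G.LocallyFinite] {H : SimpleGraph W} [H.LocallyFinite] {k : ℕ}
    (hG : G.IsRegularOfDegree k) (hH : H.IsRegularOfDegree k) {f : G →g H}
    (hf : Function.Injective f) {a b : V} : H.Adj (f a) (f b) ↔ G.Adj a b := by
  have himage : (G.neighborFinset a).map ⟨f, hf⟩ = H.neighborFinset (f a) := by
    refine eq_of_subset_of_card_le (fun w hw => ?_) ?_
    · obtain ⟨c, hc, rfl⟩ := mem_map.1 hw
      exact (H.mem_neighborFinset _ _).2 (f.map_adj ((G.mem_neighborFinset _ _).1 hc))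
    · rw [card_map, SimpleGraph.card_neighborFinset_eq_degree,
        SimpleGraph.card_neighborFinset_eq_degree, hG.degree_eq, hH.degree_eq]
  rw [← H.mem_neighborFinset, ← himage, ← G.mem_neighborFinset]
  exact mem_map' ⟨f, hf⟩

theorem existsUnique_third_neighbor [G.LocallyFinite] (hG : G.IsRegularOfDegree 3) {v a b : V}
    (ha : G.Adj v a) (hb : G.Adj v b) (hab : a ≠ b) : ∃! c, G.Adj v c ∧ c ≠ a ∧ c ≠ b := by
  classical
  have hcard : #(G.neighborFinset v \ {a, b}) = 1 := by
    rw [card_sdiff_of_subset (by simp [insert_subset_iff, ha, hb]),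
      SimpleGraph.card_neighborFinset_eq_degree, hG.degree_eq, card_pair hab]
  obtain ⟨c, hc⟩ := card_eq_one.1 hcard
  have hmem (d : V) : G.Adj v d ∧ d ≠ a ∧ d ≠ b ↔ d = c := by
    simpa using Finset.ext_iff.1 hc d
  exact ⟨c, (hmem c).2 rfl, fun d => (hmem d).1⟩

variable [Fintype V] [DecidableRel G.Adj] {n k ℓ μ : ℕ}

theorem isSRGWith_of_iso [Fintype W] {H : SimpleGraph W} [DecidableRel H.Adj]
    (hG : G.IsSRGWith n k ℓ μ) (f : G ≃g H) : H.IsSRGWith n k ℓ μ := by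
  have hcard (v w : W) : Fintype.card (G.commonNeighbors (f.symm v) (f.symm w)) =
      Fintype.card (H.commonNeighbors v w) := by
    refine Fintype.card_congr (f.toEquiv.subtypeEquiv fun u => ?_)
    simp [SimpleGraph.mem_commonNeighbors, ← f.map_adj_iff]
  refine ⟨(Fintype.card_congr f.toEquiv).symm.trans hG.card, fun v => ?_, fun v w h => ?_,
    fun v w hne h => ?_⟩
  · rw [← f.symm.degree_eq, hG.regular.degree_eq]
  · rw [← hcard, hG.of_adj _ _ (f.symm.map_adj_iff.2 h)]
  · rw [← hcard, hG.of_not_adj (f.symm.injective.ne hne) (f.symm.map_adj_iff.not.2 h)]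

theorem isSRGWith_iff_card_inter_neighborFinset [DecidableEq V] : G.IsSRGWith n k ℓ μ ↔
    Fintype.card V = n ∧ G.IsRegularOfDegree k ∧ ∀ u v, u ≠ v →
      #(G.neighborFinset u ∩ G.neighborFinset v) = if G.Adj u v then ℓ else μ := by
  have hcard (u v : V) : #(G.neighborFinset u ∩ G.neighborFinset v) =
      Fintype.card (G.commonNeighbors u v) := by
    rw [← Set.toFinset_card]
    congr 1
    ext w
    simp [SimpleGraph.mem_commonNeighbors]
  simp only [hcard]
  refine ⟨fun h => ⟨h.card, h.regular, fun u v huv => ?_⟩, fun ⟨hV, hk, h⟩ =>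
    ⟨hV, hk, fun u v huv => by rw [h u v huv.ne, if_pos huv],
      fun u v hne huv => by rw [h u v hne, if_neg huv]⟩⟩
  split_ifs with hadj
  exacts [h.of_adj u v hadj, h.of_not_adj huv hadj]

theorem cliqueFree_three_of_isSRGWith (hG : G.IsSRGWith n k 0 μ) : G.CliqueFree 3 := by
  classical
  intro s hs
  obtain ⟨u, v, w, huv, huw, hvw, rfl⟩ := SimpleGraph.is3Clique_iff.1 hs
  have := Fintype.card_eq_zero_iff.1 (hG.of_adj u v huv)
  exact this.false ⟨w, huw, hvw⟩

theorem exists_common_neighbor (hG : G.IsSRGWith n k ℓ 1) {u v : V} (hne : u ≠ v)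
    (huv : ¬G.Adj u v) : ∃ w, G.Adj u w ∧ G.Adj v w := by
  obtain ⟨⟨w, hw⟩, -⟩ := Fintype.card_eq_one_iff.1 (hG.of_not_adj hne huv)
  exact ⟨w, hw⟩

theorem common_neighbor_unique (hG : G.IsSRGWith n k 0 1) {u v w w' : V} (hne : u ≠ v)
    (huw : G.Adj u w) (hvw : G.Adj v w) (huw' : G.Adj u w') (hvw' : G.Adj v w') : w = w' := by
  have huv : ¬G.Adj u v :=
    not_adj_of_cliqueFree_three (cliqueFree_three_of_isSRGWith hG) huw hvw.symm
  have := Fintype.card_le_one_iff.1 (hG.of_not_adj hne huv).le ⟨w, huw, hvw⟩ ⟨w', huw', hvw'⟩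
  exact congrArg Subtype.val this

end MooreGraphs

open SimpleGraph in
/-- The Petersen graph, as the union of a pentagon (the left summand), the complementary pentagram
(the right summand) and the spokes joining equal indices. -/
def petersenGraph : SimpleGraph (Fin 5 ⊕ Fin 5) where
  Adj
    | .inl i, .inl j => (cycleGraph 5).Adj i j
    | .inr i, .inr j => (cycleGraph 5)ᶜ.Adj i j
    | .inl i, .inr j | .inr i, .inl j => i = j
  symm := ⟨by rintro (i | i) (j | j) h <;> exact h.symm⟩
  loopless := ⟨by rintro (i | i) h <;> exact (h.ne rfl)⟩

instance : DecidableRel petersenGraph.Adj := by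
  rintro (i | i) (j | j) <;> unfold petersenGraph <;> infer_instance

theorem isSRGWith_petersenGraph : petersenGraph.IsSRGWith 10 3 0 1 where
  card := rfl
  regular := by unfold SimpleGraph.IsRegularOfDegree; decide
  of_adj := by decide
  of_not_adj := by unfold Pairwise; decide

section Pentagons

open SimpleGraph

variable {V : Type*} {G : SimpleGraph V}

theorem pentagon_adj_succ (c : cycleGraph 5 →g G) (i : Fin 5) : G.Adj (c i) (c (i + 1)) :=
  c.map_adj (cycleGraph_adj.2 (Or.inr (add_sub_cancel_left i 1)))

/-- The closed walk of length `5` through `v 0, …, v 4`, as a homomorphism from the pentagon. -/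
def pentagonOfAdj (v : Fin 5 → V) (hv : ∀ i, G.Adj (v i) (v (i + 1))) : cycleGraph 5 →g G where
  toFun := v
  map_rel' {i j} h := by
    rcases cycleGraph_adj.1 h with h | h
    · rw [← sub_add_cancel i j, h, add_comm]
      exact (hv j).symm
    · rw [← sub_add_cancel j i, h, add_comm]
      exact hv i

theorem ne_of_adj_of_adj_of_adj (hG : G.CliqueFree 3) {a b c d : V} (hab : G.Adj a b)
    (hbc : G.Adj b c) (hcd : G.Adj c d) : d ≠ a := by
  rintro rfl
  exact not_adj_of_cliqueFree_three hG hab hbc hcd.symm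

/-- The inclusion of the outer pentagon into the Petersen graph. -/
def petersenRim : cycleGraph 5 →g petersenGraph where
  toFun := .inl
  map_rel' h := h

theorem injective_of_petersenGraph_hom (hG : G.CliqueFree 3) (f : petersenGraph →g G) :
    Function.Injective f := by
  have hwalk : ∀ a b, a ≠ b → petersenGraph.Adj a b ∨
      ∃ u v, petersenGraph.Adj a u ∧ petersenGraph.Adj u v ∧ petersenGraph.Adj v b := by
    decide
  intro a b hab
  by_contra hne
  rcases hwalk a b hne with h | ⟨u, v, hau, huv, hvb⟩
  · exact (f.map_adj h).ne hab
  · exact ne_of_adj_of_adj_of_adj hG (f.map_adj hau) (f.map_adj huv) (f.map_adj hvb) hab.symm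

theorem injective_comp_petersenRim [G.LocallyFinite] (hG : G.IsRegularOfDegree 3) :
    Function.Injective fun f : petersenGraph ≃g G => f.toHom.comp petersenRim := by
  intro f g h
  have hrim (i : Fin 5) : f (.inl i) = g (.inl i) := DFunLike.congr_fun h i
  have hadj : ∀ i : Fin 5, (cycleGraph 5).Adj i (i + 1) ∧ (cycleGraph 5).Adj i (i + 4) ∧
      i + 1 ≠ i + 4 := by
    decide
  have hspoke (e : petersenGraph ≃g G) (i : Fin 5) : G.Adj (e (.inl i)) (e (.inr i)) ∧
      e (.inr i) ≠ e (.inl (i + 1)) ∧ e (.inr i) ≠ e (.inl (i + 4)) :=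
    ⟨e.map_adj_iff.2 rfl, e.injective.ne Sum.inr_ne_inl, e.injective.ne Sum.inr_ne_inl⟩
  ext (i | i)
  · exact hrim i
  · obtain ⟨hsucc, hpred, hne⟩ := hadj i
    have hfi := hspoke f i
    rw [hrim, hrim, hrim] at hfi
    exact (existsUnique_third_neighbor hG (g.map_adj_iff.2 (petersenRim.map_adj hsucc))
      (g.map_adj_iff.2 (petersenRim.map_adj hpred))
      (g.injective.ne (Sum.inl_injective.ne hne))).unique hfi (hspoke g i)

variable [Fintype V] [DecidableRel G.Adj] {n k : ℕ}

theorem pentagon_ext (hG : G.IsSRGWith n k 0 1) {c d : cycleGraph 5 →g G} (h0 : c 0 = d 0)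
    (h1 : c 1 = d 1) (h2 : c 2 = d 2) (h4 : c 4 = d 4) : c = d := by
  have hc := pentagon_adj_succ c
  have hd := pentagon_adj_succ d
  have hne : c 2 ≠ c 4 :=
    ne_of_adj_of_adj_of_adj (cliqueFree_three_of_isSRGWith hG) (hc 4) (hc 0) (hc 1)
  have h3 : c 3 = d 3 :=
    common_neighbor_unique hG hne (hc 2) (hc 3).symm (h2 ▸ hd 2) (h4 ▸ (hd 3).symm)
  ext i
  fin_cases i
  exacts [h0, h1, h2, h3, h4]

theorem exists_pentagon_of_adj_of_adj_of_adj (hG : G.IsSRGWith n k 0 1) {a b c d : V}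
    (hab : G.Adj a b) (hbc : G.Adj b c) (hcd : G.Adj c d) (hac : a ≠ c) (hbd : b ≠ d) :
    ∃ f : cycleGraph 5 →g G, f 4 = a ∧ f 0 = b ∧ f 1 = c ∧ f 2 = d := by
  have hda : ¬G.Adj d a := fun hda =>
    hac (common_neighbor_unique hG hbd hab.symm hda hbc hcd.symm)
  obtain ⟨e, hde, hae⟩ := exists_common_neighbor hG
    (ne_of_adj_of_adj_of_adj (cliqueFree_three_of_isSRGWith hG) hab hbc hcd) hda
  refine ⟨pentagonOfAdj ![b, c, d, e, a] fun i => ?_, rfl, rfl, rfl, rfl⟩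
  fin_cases i
  exacts [hbc, hcd, hde, hae.symm, hab]

theorem card_pentagon_of_adj (hG : G.IsSRGWith n k 0 1) {u v : V} (huv : G.Adj u v) :
    Nat.card {c : cycleGraph 5 →g G // c 0 = u ∧ c 1 = v} = (k - 1) ^ 2 := by
  classical
  have hfree := cliqueFree_three_of_isSRGWith hG
  have hcard {a b : V} (hab : G.Adj a b) : #((G.neighborFinset a).erase b) = k - 1 := by
    rw [card_erase_of_mem ((G.mem_neighborFinset a b).2 hab), card_neighborFinset_eq_degree,
      hG.regular.degree_eq]
  let ends : {c : cycleGraph 5 →g G // c 0 = u ∧ c 1 = v} →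
      ((G.neighborFinset u).erase v ×ˢ (G.neighborFinset v).erase u : Finset (V × V)) :=
    fun c => ⟨(c.1 4, c.1 2), by
      obtain ⟨c, rfl, rfl⟩ := c
      have adj := pentagon_adj_succ c
      simpa using ⟨⟨ne_of_adj_of_adj_of_adj hfree (adj 1) (adj 2) (adj 3), (adj 4).symm⟩,
        (ne_of_adj_of_adj_of_adj hfree (adj 2) (adj 3) (adj 4)).symm, adj 1⟩⟩
  have hinj : Function.Injective ends := by
    rintro ⟨c, rfl, rfl⟩ ⟨d, h0, h1⟩ h
    obtain ⟨h4, h2⟩ : c 4 = d 4 ∧ c 2 = d 2 := by simpa [ends] using h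
    exact Subtype.ext (pentagon_ext hG h0.symm h1.symm h2 h4)
  have hsurj : Function.Surjective ends := by
    rintro ⟨⟨a, d⟩, h⟩
    simp only [mem_product, mem_erase, mem_neighborFinset] at h
    obtain ⟨⟨hav, hua⟩, hdu, hvd⟩ := h
    obtain ⟨c, rfl, h0, h1, rfl⟩ :=
      exists_pentagon_of_adj_of_adj_of_adj hG hua.symm huv hvd hav hdu.symm
    exact ⟨⟨c, h0, h1⟩, rfl⟩
  rw [Nat.card_congr (Equiv.ofBijective ends ⟨hinj, hsurj⟩), Nat.card_eq_fintype_card,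
    Fintype.card_coe, card_product, hcard huv, hcard huv.symm, sq]

theorem card_pentagon (hG : G.IsSRGWith n k 0 1) :
    Nat.card (cycleGraph 5 →g G) = n * k * (k - 1) ^ 2 := by
  classical
  let side (c : cycleGraph 5 →g G) : G.Dart := ⟨(c 0, c 1), pentagon_adj_succ c 0⟩
  have hside (d : G.Dart) : Nat.card {c // side c = d} = (k - 1) ^ 2 := by
    rw [← card_pentagon_of_adj hG d.adj]
    simp [side, Dart.ext_iff, Prod.ext_iff]
  have hdarts : Fintype.card G.Dart = n * k := by
    rw [dart_card_eq_sum_degrees, sum_congr rfl fun v _ => hG.regular.degree_eq v, sum_const,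
      card_univ, hG.card, smul_eq_mul]
  rw [← Nat.card_congr (Equiv.sigmaFiberEquiv side), Nat.card_sigma,
    sum_congr rfl fun d _ => hside d, sum_const, card_univ, hdarts, smul_eq_mul]

theorem adj_of_pentagon (hG : G.IsSRGWith n 3 0 1) {a b c d e p q : V} (hab : G.Adj a b)
    (hbc : G.Adj b c) (hcd : G.Adj c d) (hde : G.Adj d e) (hea : G.Adj e a)
    (hap : G.Adj a p ∧ p ≠ b ∧ p ≠ e) (hcq : G.Adj c q ∧ q ≠ d ∧ q ≠ b) : G.Adj p q := by
  have hfree := cliqueFree_three_of_isSRGWith hG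
  have hac : a ≠ c := ne_of_adj_of_adj_of_adj hfree hcd hde hea
  have hda : d ≠ a := ne_of_adj_of_adj_of_adj hfree hab hbc hcd
  have hbd : b ≠ d := ne_of_adj_of_adj_of_adj hfree hde hea hab
  have hpc : p ≠ c := by
    rintro rfl
    exact not_adj_of_cliqueFree_three hfree hab hbc hap.1
  have hnpc : ¬G.Adj p c := fun h =>
    hap.2.1 (common_neighbor_unique hG hac hap.1 h.symm hab hbc.symm)
  obtain ⟨w, hpw, hcw⟩ := exists_common_neighbor hG hpc hnpc
  have hwb : w ≠ b := by
    rintro rfl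
    exact not_adj_of_cliqueFree_three hfree hap.1 hpw hab
  have hwd : w ≠ d := by
    rintro rfl
    exact hap.2.2 (common_neighbor_unique hG hda.symm hap.1 hpw.symm hea.symm hde)
  obtain rfl : w = q :=
    (existsUnique_third_neighbor hG.regular hcd hbc.symm hbd.symm).unique ⟨hcw, hwd, hwb⟩ hcq
  exact hpw

theorem exists_hom_comp_petersenRim (hG : G.IsSRGWith n 3 0 1) (c : cycleGraph 5 →g G) :
    ∃ f : petersenGraph →g G, f.comp petersenRim = c := by
  have hfree := cliqueFree_three_of_isSRGWith hG
  have hadj (i : Fin 5) : G.Adj (c i) (c (i + 1)) ∧ G.Adj (c (i + 1)) (c (i + 2)) ∧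
      G.Adj (c (i + 2)) (c (i + 3)) ∧ G.Adj (c (i + 3)) (c (i + 4)) ∧
      G.Adj (c (i + 4)) (c i) := by
    have h : ∀ i : Fin 5, (cycleGraph 5).Adj i (i + 1) ∧ (cycleGraph 5).Adj (i + 1) (i + 2) ∧
        (cycleGraph 5).Adj (i + 2) (i + 3) ∧ (cycleGraph 5).Adj (i + 3) (i + 4) ∧
        (cycleGraph 5).Adj (i + 4) i := by
      decide
    exact (h i).imp c.map_adj (.imp c.map_adj (.imp c.map_adj (.imp c.map_adj c.map_adj)))
  have hspoke (i : Fin 5) : ∃! s, G.Adj (c i) s ∧ s ≠ c (i + 1) ∧ s ≠ c (i + 4) := by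
    obtain ⟨h01, h12, h23, h34, h40⟩ := hadj i
    exact existsUnique_third_neighbor hG.regular h01 h40.symm
      (ne_of_adj_of_adj_of_adj hfree h12 h23 h34).symm
  choose s hs _ using hspoke
  have inner (i : Fin 5) : G.Adj (s i) (s (i + 2)) := by
    obtain ⟨h01, h12, h23, h34, h40⟩ := hadj i
    refine adj_of_pentagon hG h01 h12 h23 h34 h40 (hs i) ?_
    simpa [add_assoc, show (2 : Fin 5) + 1 = 3 from rfl, show (2 : Fin 5) + 4 = 1 from rfl]
      using hs (i + 2)
  refine ⟨⟨Sum.elim c s, ?_⟩, rfl⟩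
  rintro (i | i) (j | j) h
  · exact c.map_adj h
  · obtain rfl : i = j := h
    exact (hs i).1
  · obtain rfl : i = j := h
    exact (hs i).1.symm
  · have : ∀ i j, (cycleGraph 5)ᶜ.Adj i j → j = i + 2 ∨ i = j + 2 := by decide
    rcases this i j h with rfl | rfl
    · exact inner i
    · exact (inner j).symm

theorem card_iso_petersenGraph (hG : G.IsSRGWith 10 3 0 1) :
    Nat.card (petersenGraph ≃g G) = 120 := by
  have hbij : Function.Bijective fun f : petersenGraph ≃g G => f.toHom.comp petersenRim := by
    refine ⟨injective_comp_petersenRim hG.regular, fun c => ?_⟩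
    obtain ⟨f, hf⟩ := exists_hom_comp_petersenRim hG c
    have hinj := injective_of_petersenGraph_hom (cliqueFree_three_of_isSRGWith hG) f
    have hf_bij : Function.Bijective f :=
      (Fintype.bijective_iff_injective_and_card f).2 ⟨hinj, by rw [hG.card]; rfl⟩
    exact ⟨⟨Equiv.ofBijective f hf_bij,
      map_adj_iff_of_injective isSRGWith_petersenGraph.regular hG.regular hinj⟩, hf⟩
  rw [Nat.card_congr (Equiv.ofBijective _ hbij), card_pentagon hG]
  norm_num

open Classical in
theorem ncard_isSRGWith_ten_three_zero_one (hV : Fintype.card V = 10) :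
    {G : SimpleGraph V | G.IsSRGWith 10 3 0 1}.ncard = 30240 := by
  have hiso (G : SimpleGraph V) :
      Nat.card (petersenGraph ≃g G) = if G.IsSRGWith 10 3 0 1 then 120 else 0 := by
    split_ifs with hG
    · exact card_iso_petersenGraph hG
    · have : IsEmpty (petersenGraph ≃g G) :=
        ⟨fun f => hG (isSRGWith_of_iso isSRGWith_petersenGraph f)⟩
      exact Nat.card_of_isEmpty
  have hequiv : Nat.card (Fin 5 ⊕ Fin 5 ≃ V) = 30240 * 120 := by
    rw [Nat.card_eq_fintype_card, Fintype.card_equiv (Fintype.equivOfCardEq (by simp [hV]))]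
    rfl
  have hmul : {G : SimpleGraph V | G.IsSRGWith 10 3 0 1}.ncard * 120 = 30240 * 120 := by
    rw [← hequiv, ← sum_natCard_iso petersenGraph, sum_congr rfl fun G _ => hiso G, ← sum_filter,
      sum_const, smul_eq_mul, ← Set.ncard_coe_finset, coe_filter_univ]
  exact Nat.mul_right_cancel (by norm_num) hmul

end Pentagons

section RegularSimplices

variable {ι E : Type*} [Fintype ι] [DecidableEq ι] [NormedAddCommGroup E] [InnerProductSpace ℝ E]
  {c : ℝ} {x : ι → E}

/-- Regular simplices centered at the origin, in the form of their Gram matrix: `c` times the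
orthogonal projection onto the vectors of coordinate sum `0`. -/
def IsCenteredSimplex (c : ℝ) (x : ι → E) : Prop :=
  ∀ i j, ⟪x i, x j⟫ = c * ((if i = j then 1 else 0) - (Fintype.card ι : ℝ)⁻¹)

theorem IsCenteredSimplex.inner_sum_smul (hx : IsCenteredSimplex c x) (w : ι → ℝ) (j : ι) :
    ⟪x j, ∑ i, w i • x i⟫ = c * (w j - (∑ i, w i) / Fintype.card ι) := by
  simp only [inner_sum, real_inner_smul_right, hx j, mul_left_comm _ c, mul_sub, mul_ite, mul_one,
    mul_zero, sum_sub_distrib, sum_ite_eq, mem_univ, if_true, ← mul_sum, ← sum_mul, div_eq_mul_inv]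
  ring

theorem IsCenteredSimplex.inner_sum_smul_sum_smul (hx : IsCenteredSimplex c x) (v w : ι → ℝ) :
    ⟪∑ i, v i • x i, ∑ i, w i • x i⟫ =
      c * (∑ i, v i * w i - (∑ i, v i) * (∑ i, w i) / Fintype.card ι) := by
  simp only [sum_inner, real_inner_smul_left, hx.inner_sum_smul, mul_left_comm _ c, mul_sub,
    sum_sub_distrib, ← mul_sum, ← sum_mul, mul_div_assoc]

theorem IsCenteredSimplex.affineIndependent (hx : IsCenteredSimplex c x) (hc : c ≠ 0) :
    AffineIndependent ℝ x := by
  rw [affineIndependent_iff_of_fintype]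
  intro w hw hzero j
  rw [univ.weightedVSub_eq_linear_combination hw] at hzero
  have h := hx.inner_sum_smul w j
  rw [hzero, inner_zero_right, hw, zero_div, sub_zero] at h
  exact (mul_eq_zero.1 h.symm).resolve_left hc

theorem IsCenteredSimplex.ext_inner [FiniteDimensional ℝ E] (hx : IsCenteredSimplex c x)
    (hc : c ≠ 0) (hcard : Fintype.card ι = Module.finrank ℝ E + 1) {y z : E}
    (h : ∀ i, ⟪x i, y⟫ = ⟪x i, z⟫) : y = z := by
  have htop := (hx.affineIndependent hc).vectorSpan_eq_top_of_card_eq_finrank_add_one hcard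
  have hle : vectorSpan ℝ (Set.range x) ≤ (ℝ ∙ (y - z))ᗮ := by
    rw [vectorSpan, Submodule.span_le]
    rintro _ ⟨_, ⟨i, rfl⟩, _, ⟨j, rfl⟩, rfl⟩
    simp [Submodule.mem_orthogonal_singleton_iff_inner_left, inner_sub_left, inner_sub_right, h]
  have hmem : y - z ∈ (ℝ ∙ (y - z))ᗮ := hle (htop ▸ Submodule.mem_top)
  rw [Submodule.mem_orthogonal_singleton_iff_inner_left, inner_self_eq_zero] at hmem
  exact sub_eq_zero.1 hmem

theorem IsRegularSimplex.isCenteredSimplex {x : Fin 11 → EuclideanSpace ℝ (Fin 10)}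
    (hx : IsRegularSimplex x) : IsCenteredSimplex (11 / 10) x := by
  intro i j
  split_ifs with h
  · rw [h, real_inner_self_eq_norm_sq, hx.1]
    norm_num
  · rw [hx.2 i j h]
    norm_num

end RegularSimplices

section Weights

variable {ι : Type*} [DecidableEq ι] {p p' : ι} {T T' : Finset ι}

/-- The multiset containing `p` once and each element of `T` twice, as a multiplicity function. -/
def weight (p : ι) (T : Finset ι) (i : ι) : ℕ :=
  (if i = p then 1 else 0) + if i ∈ T then 2 else 0

theorem weight_eq_zero_iff {i : ι} : weight p T i = 0 ↔ i ∉ insert p T := by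
  simp [weight]

theorem weight_eq_one_iff (hp : p ∉ T) {i : ι} : weight p T i = 1 ↔ i = p := by
  unfold weight
  split_ifs <;> simp_all

theorem weight_eq_two_iff (hp : p ∉ T) {i : ι} : weight p T i = 2 ↔ i ∈ T := by
  unfold weight
  split_ifs <;> simp_all

theorem weight_inj (hp : p ∉ T) (hp' : p' ∉ T') :
    weight p T = weight p' T' ↔ p = p' ∧ T = T' := by
  refine ⟨fun h => ⟨?_, ?_⟩, fun ⟨hp, hT⟩ => by rw [hp, hT]⟩
  · rw [← weight_eq_one_iff hp', ← h, weight_eq_one_iff hp]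
  · ext i
    rw [← weight_eq_two_iff hp, h, weight_eq_two_iff hp']

theorem sum_weight (S : Finset ι) :
    ∑ i ∈ S, weight p T i = (if p ∈ S then 1 else 0) + 2 * #(S ∩ T) := by
  simp [weight, sum_add_distrib, mul_comm]

variable [Fintype ι]

theorem sum_weight_mul (f : ι → ℕ) : ∑ i, weight p T i * f i = f p + 2 * ∑ i ∈ T, f i := by
  simp [weight, add_mul, sum_add_distrib, mul_sum]

theorem sum_weight_mul_weight : ∑ i, weight p T i * weight p' T' i =
    weight p' T' p + 2 * ((if p' ∈ T then 1 else 0) + 2 * #(T ∩ T')) := by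
  rw [sum_weight_mul, sum_weight]

theorem sum_weight_mul_weight_self (hp : p ∉ T) :
    ∑ i, weight p T i * weight p T i = 1 + 4 * #T := by
  rw [sum_weight_mul_weight, inter_self, (weight_eq_one_iff hp).2 rfl, if_neg hp]
  ring

theorem sum_weight_mul_weight_eq_four_iff : ∑ i, weight p T i * weight p' T' i = 4 ↔
    p ≠ p' ∧ (p' ∈ T ↔ p ∈ T') ∧ #(T ∩ T') = if p' ∈ T then 0 else 1 := by
  rw [sum_weight_mul_weight, weight]
  rcases eq_or_ne p p' with rfl | hne
  · simp only [if_true, ne_eq, not_true, false_and, iff_false]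
    split_ifs <;> omega
  · by_cases h : p ∈ T' <;> by_cases h' : p' ∈ T <;>
      simp only [hne, h, h', if_true, if_false, ne_eq, not_false_eq_true, true_and, false_and,
        iff_true, iff_false, not_true] <;> omega

variable {α : Type*} [DecidableEq α] {a : ℕ → α}

theorem card_levels_comp_weight (ha : Function.Injective a) (hp : p ∉ T) :
    #{i | (a ∘ weight p T) i = a 0} = Fintype.card ι - (#T + 1) ∧
      #{i | (a ∘ weight p T) i = a 1} = 1 ∧ #{i | (a ∘ weight p T) i = a 2} = #T := by
  have h0 : univ.filter (weight p T · = 0) = (insert p T)ᶜ := by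
    ext
    simp only [mem_filter_univ, mem_compl, weight_eq_zero_iff]
  have h1 : univ.filter (weight p T · = 1) = {p} := by
    ext
    simp [weight_eq_one_iff hp]
  have h2 : univ.filter (weight p T · = 2) = T := by
    ext
    simp [weight_eq_two_iff hp]
  simp only [Function.comp_apply, ha.eq_iff, h0, h1, h2, card_singleton, card_compl,
    card_insert_of_notMem hp, and_self]

theorem exists_eq_comp_weight (ha : Function.Injective a) {f : ι → α} (h1 : #{i | f i = a 1} = 1)
    (h : #{i | f i = a 0} + 1 + #{i | f i = a 2} = Fintype.card ι) :
    ∃ p T, #T = #{i | f i = a 2} ∧ p ∉ T ∧ f = a ∘ weight p T := by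
  obtain ⟨p, hp⟩ := card_eq_one.1 h1
  have hfp (i : ι) : f i = a 1 ↔ i = p := by simpa using Finset.ext_iff.1 hp i
  set T := univ.filter (f · = a 2)
  have hpT : p ∉ T := by simp [T, (hfp p).2 rfl, ha.eq_iff]
  have hrest : univ.filter (f · = a 0) = (insert p T)ᶜ := by
    refine eq_of_subset_of_card_le (fun i hi => ?_) ?_
    · simp [T, ← hfp, (mem_filter.1 hi).2, ha.eq_iff]
    · rw [card_compl, card_insert_of_notMem hpT]
      omega
  refine ⟨p, T, rfl, hpT, funext fun i => ?_⟩
  by_cases hi : i ∈ insert p T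
  · rcases mem_insert.1 hi with rfl | hi
    · rw [Function.comp_apply, (weight_eq_one_iff hpT).2 rfl, (hfp i).2 rfl]
    · rw [Function.comp_apply, (weight_eq_two_iff hpT).2 hi, (mem_filter.1 hi).2]
  · rw [Function.comp_apply, weight_eq_zero_iff.2 hi]
    rw [← mem_compl, ← hrest] at hi
    exact (mem_filter.1 hi).2

end Weights

theorem ncard_setOf_ne_zero_and {n : ℕ} (P : Fin (n + 1) → Prop) [DecidablePred P] :
    {i | i ≠ 0 ∧ P i}.ncard = #{i : Fin n | P i.succ} := by
  rw [← Set.ncard_coe_finset, ← Set.ncard_image_of_injective _ (Fin.succ_injective n)]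
  congr 1
  ext i
  cases i using Fin.cases <;> simp

section WeightVectors

variable {x : Fin 11 → EuclideanSpace ℝ (Fin 10)} {p p' : Fin 10} {T T' : Finset (Fin 10)}

/-- The inner product of a vector of `Y1` with a simplex vertex in terms of the multiplicity `m` of
that vertex, see `weightVector`; the multiplicities `0`, `1`, `2` give `α1`, `α2`, `α3`. -/
def angle (m : ℕ) : ℝ := 4 / 15 - 11 / 30 * m

theorem angle_zero : angle 0 = α1 := by norm_num [angle, α1]

theorem angle_one : angle 1 = α2 := by norm_num [angle, α2]

theorem angle_two : angle 2 = α3 := by norm_num [angle, α3]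

theorem angle_injective : Function.Injective angle := fun m n h => by
  unfold angle at h
  exact_mod_cast (by linarith : (m : ℝ) = n)

/-- The vector in which the simplex vertex `x 0` has multiplicity `1` and `x i.succ` has
multiplicity `weight p T i`; the scalar makes it a unit vector when `#T = 3` and `p ∉ T`. -/
def weightVector (x : Fin 11 → EuclideanSpace ℝ (Fin 10)) (p : Fin 10) (T : Finset (Fin 10)) :
    EuclideanSpace ℝ (Fin 10) :=
  (-(1 / 3) : ℝ) • ∑ i, (Fin.cons 1 fun j => (weight p T j : ℝ) : Fin 11 → ℝ) i • x i

theorem sum_cons_weight (hT : #T = 3) :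
    ∑ i, (Fin.cons 1 fun j => (weight p T j : ℝ) : Fin 11 → ℝ) i = 8 := by
  simp only [Fin.sum_univ_succ (n := 10), Fin.cons_zero, Fin.cons_succ]
  rw [← Nat.cast_sum, sum_weight, univ_inter, hT]
  norm_num

theorem inner_zero_weightVector (hx : IsRegularSimplex x) (hT : #T = 3) :
    ⟪x 0, weightVector x p T⟫ = α2 := by
  rw [weightVector, real_inner_smul_right, hx.isCenteredSimplex.inner_sum_smul,
    sum_cons_weight hT, Fin.cons_zero, Fintype.card_fin, α2]
  norm_num

theorem inner_succ_weightVector (hx : IsRegularSimplex x) (hT : #T = 3) (i : Fin 10) :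
    ⟪x i.succ, weightVector x p T⟫ = angle (weight p T i) := by
  rw [weightVector, real_inner_smul_right, hx.isCenteredSimplex.inner_sum_smul,
    sum_cons_weight hT, Fin.cons_succ, Fintype.card_fin, angle]
  push_cast
  ring

theorem inner_weightVector (hx : IsRegularSimplex x) (hT : #T = 3) (hT' : #T' = 3) :
    ⟪weightVector x p T, weightVector x p' T'⟫ =
      11 / 90 * (∑ i, weight p T i * weight p' T' i : ℕ) - 53 / 90 := by
  rw [weightVector, weightVector, real_inner_smul_left, real_inner_smul_right,
    hx.isCenteredSimplex.inner_sum_smul_sum_smul, sum_cons_weight hT, sum_cons_weight hT']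
  simp only [Fin.sum_univ_succ (n := 10), Fin.cons_zero, Fin.cons_succ]
  push_cast [Fintype.card_fin]
  ring

theorem norm_weightVector (hx : IsRegularSimplex x) (hT : #T = 3) (hp : p ∉ T) :
    ‖weightVector x p T‖ = 1 := by
  rw [← sq_eq_sq₀ (norm_nonneg _) zero_le_one, ← real_inner_self_eq_norm_sq,
    inner_weightVector hx hT hT, sum_weight_mul_weight_self hp, hT]
  norm_num

theorem inner_weightVector_eq_iff (hx : IsRegularSimplex x) (hT : #T = 3) (hT' : #T' = 3) :
    ⟪weightVector x p T, weightVector x p' T'⟫ = α2 ↔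
      p ≠ p' ∧ (p' ∈ T ↔ p ∈ T') ∧ #(T ∩ T') = if p' ∈ T then 0 else 1 := by
  rw [← sum_weight_mul_weight_eq_four_iff, inner_weightVector hx hT hT', α2,
    ← Nat.cast_inj (R := ℝ), Nat.cast_ofNat]
  constructor <;> intro h <;> linarith

theorem weightVector_inj (hx : IsRegularSimplex x) (hT : #T = 3) (hT' : #T' = 3) (hp : p ∉ T)
    (hp' : p' ∉ T') : weightVector x p T = weightVector x p' T' ↔ p = p' ∧ T = T' := by
  refine ⟨fun h => (weight_inj hp hp').1 (funext fun i => angle_injective ?_),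
    fun ⟨hp, hT⟩ => by rw [hp, hT]⟩
  rw [← inner_succ_weightVector hx hT, h, inner_succ_weightVector hx hT']

theorem weightVector_mem_Y1set (hx : IsRegularSimplex x) (hT : #T = 3) (hp : p ∉ T) :
    weightVector x p T ∈ Y1set x := by
  have hlevels := card_levels_comp_weight angle_injective hp
  rw [angle_zero, angle_one, angle_two, hT] at hlevels
  refine ⟨norm_weightVector hx hT hp, inner_zero_weightVector hx hT, ?_⟩
  simp only [ncard_setOf_ne_zero_and, inner_succ_weightVector hx hT]
  exact hlevels

theorem mem_Y1set_iff (hx : IsRegularSimplex x) {y : EuclideanSpace ℝ (Fin 10)} :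
    y ∈ Y1set x ↔ ∃ p T, #T = 3 ∧ p ∉ T ∧ weightVector x p T = y := by
  refine ⟨?_, fun ⟨p, T, hT, hp, hy⟩ => hy ▸ weightVector_mem_Y1set hx hT hp⟩
  rintro ⟨-, h0, h1, h2, h3⟩
  rw [ncard_setOf_ne_zero_and, ← angle_zero] at h1
  rw [ncard_setOf_ne_zero_and, ← angle_one] at h2
  rw [ncard_setOf_ne_zero_and, ← angle_two] at h3
  obtain ⟨p, T, hT, hp, hsucc⟩ :=
    exists_eq_comp_weight angle_injective h2 (by rw [h1, h3, Fintype.card_fin])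
  rw [h3] at hT
  refine ⟨p, T, hT, hp, hx.isCenteredSimplex.ext_inner (by norm_num) (by simp) fun i => ?_⟩
  cases i using Fin.cases with
  | zero => rw [inner_zero_weightVector hx hT, h0]
  | succ i => rw [inner_succ_weightVector hx hT]; exact (congrFun hsucc i).symm

end WeightVectors

section Cliques

variable {x : Fin 11 → EuclideanSpace ℝ (Fin 10)} {T : Fin 10 → Finset (Fin 10)}

theorem IsClique10.exists_eq_range {D : Set (EuclideanSpace ℝ (Fin 10))} (hx : IsRegularSimplex x)
    (hD : IsClique10 x D) : ∃ T : Fin 10 → Finset (Fin 10), (∀ i, #(T i) = 3) ∧ (∀ i, i ∉ T i) ∧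
      Set.range (fun i => weightVector x i (T i)) = D := by
  obtain ⟨hsub, hcard, hadj⟩ := hD
  choose p T hT hp hy using fun y : D => (mem_Y1set_iff hx).1 (hsub y.2)
  have hinj : Function.Injective p := by
    intro y z hyz
    by_contra hne
    have h := hadj y y.2 z z.2 (Subtype.coe_injective.ne hne)
    rw [← hy y, ← hy z, inner_weightVector_eq_iff hx (hT y) (hT z)] at h
    exact h.1 hyz
  have hbij : Function.Bijective p := by
    refine (Nat.bijective_iff_injective_and_card p).2 ⟨hinj, ?_⟩
    rw [Nat.card_coe_set_eq, hcard, Nat.card_fin]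
  let e := Equiv.ofBijective p hbij
  refine ⟨T ∘ e.symm, fun i => hT _, fun i => ?_, ?_⟩
  · have h := hp (e.symm i)
    rwa [show p (e.symm i) = i from e.apply_symm_apply i] at h
  · rw [← e.surjective.range_comp]
    have hrange : (fun i => weightVector x i ((T ∘ e.symm) i)) ∘ e = Subtype.val := by
      ext1 y
      simp only [Function.comp_apply, e.symm_apply_apply]
      exact hy y
    rw [hrange, Subtype.range_val]

theorem isClique10_range_weightVector_iff (hx : IsRegularSimplex x) (hT : ∀ i, #(T i) = 3)
    (hmem : ∀ i, i ∉ T i) : IsClique10 x (Set.range fun i => weightVector x i (T i)) ↔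
      ∀ i j, i ≠ j → (j ∈ T i ↔ i ∈ T j) ∧ #(T i ∩ T j) = if j ∈ T i then 0 else 1 := by
  have hinj : Function.Injective fun i => weightVector x i (T i) := fun i j h =>
    ((weightVector_inj hx (hT i) (hT j) (hmem i) (hmem j)).1 h).1
  have hsub : (Set.range fun i => weightVector x i (T i)) ⊆ Y1set x :=
    Set.range_subset_iff.2 fun i => weightVector_mem_Y1set hx (hT i) (hmem i)
  have hcard : (Set.range fun i => weightVector x i (T i)).ncard = 10 := by
    rw [← Set.image_univ, Set.ncard_image_of_injective _ hinj, Set.ncard_univ, Nat.card_fin]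
  simp only [IsClique10, hsub, hcard, true_and, Set.forall_mem_range, hinj.ne_iff,
    inner_weightVector_eq_iff hx (hT _) (hT _)]
  exact forall₂_congr fun i j => forall_congr' fun hij => and_iff_right hij

open Classical in
/-- The subset of `Y1` corresponding to a cubic graph: each vertex `i` contributes the vector that
has inner product `α2` with `x i.succ`, and `α3` with `x j.succ` for the neighbors `j` of `i`. -/
def neighborhoodVectors (x : Fin 11 → EuclideanSpace ℝ (Fin 10)) (G : SimpleGraph (Fin 10)) :
    Set (EuclideanSpace ℝ (Fin 10)) :=
  Set.range fun i => weightVector x i (G.neighborFinset i)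

open Classical in
theorem neighborhoodVectors_injOn (hx : IsRegularSimplex x) :
    Set.InjOn (neighborhoodVectors x) {G | G.IsRegularOfDegree 3} := by
  intro G hG H hH h
  ext i j
  obtain ⟨k, hk⟩ : weightVector x i (G.neighborFinset i) ∈ neighborhoodVectors x H :=
    h ▸ Set.mem_range_self i
  obtain ⟨rfl, hN⟩ := (weightVector_inj hx (hH.degree_eq k) (hG.degree_eq i)
    (H.notMem_neighborFinset_self k) (G.notMem_neighborFinset_self i)).1 hk
  rw [← G.mem_neighborFinset, ← H.mem_neighborFinset, hN]

open Classical in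
theorem isClique10_neighborhoodVectors_iff (hx : IsRegularSimplex x) {G : SimpleGraph (Fin 10)}
    (hG : G.IsRegularOfDegree 3) :
    IsClique10 x (neighborhoodVectors x G) ↔ G.IsSRGWith 10 3 0 1 := by
  rw [neighborhoodVectors, isClique10_range_weightVector_iff hx hG.degree_eq
    fun i => G.notMem_neighborFinset_self i, isSRGWith_iff_card_inter_neighborFinset]
  simp [hG, G.adj_comm]

open Classical in
theorem setOf_isClique10_eq_image (hx : IsRegularSimplex x) :
    {D | IsClique10 x D} = neighborhoodVectors x '' {G | G.IsSRGWith 10 3 0 1} := by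
  ext D
  constructor
  · intro hD
    obtain ⟨T, hT, hmem, rfl⟩ := hD.exists_eq_range hx
    have hT_iff := (isClique10_range_weightVector_iff hx hT hmem).1 hD
    have hsymm (i j : Fin 10) (hij : j ∈ T i) : i ∈ T j :=
      (hT_iff i j (ne_of_mem_of_not_mem hij (hmem i)).symm).1.1 hij
    obtain ⟨G, hadj⟩ : ∃ G : SimpleGraph (Fin 10), ∀ i j, G.Adj i j ↔ j ∈ T i :=
      ⟨⟨fun i j => j ∈ T i, ⟨hsymm⟩, ⟨hmem⟩⟩, fun _ _ => Iff.rfl⟩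
    have hN (i : Fin 10) : G.neighborFinset i = T i := by
      ext j
      rw [G.mem_neighborFinset, hadj]
    have hG : G.IsRegularOfDegree 3 := fun i => by
      rw [← G.card_neighborFinset_eq_degree, hN, hT]
    have hD_eq : neighborhoodVectors x G = Set.range fun i => weightVector x i (T i) := by
      simp only [neighborhoodVectors, hN]
    exact ⟨G, (isClique10_neighborhoodVectors_iff hx hG).1 (hD_eq ▸ hD), hD_eq⟩
  · rintro ⟨G, hG, rfl⟩
    exact (isClique10_neighborhoodVectors_iff hx hG.regular).2 hG

end Cliques

/-- The graph on `Y1` contains exactly 30240 cliques of order 10. -/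
theorem card_cliques10_eq (x : Fin 11 → EuclideanSpace ℝ (Fin 10))
    (hx : IsRegularSimplex x) :
    {D : Set (EuclideanSpace ℝ (Fin 10)) | IsClique10 x D}.ncard = 30240 := by
  classical
  have hinj : Set.InjOn (neighborhoodVectors x) {G | G.IsSRGWith 10 3 0 1} :=
    (neighborhoodVectors_injOn hx).mono fun _ hG => hG.regular
  rw [setOf_isClique10_eq_image hx, hinj.ncard_image]
  exact ncard_isSRGWith_ten_three_zero_one (Fintype.card_fin 10)
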